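/- arXiv:2201.12498 — 9 statements merged into one kernel-verified Lean document; each statement's English description precedes it below -/
import Mathlib

section
/- Let δ ∈ [0,1) and let W ∈ ℝ^{n×n} be a symmetric matrix with all entries positive such that W_{sj}/W_{tj} ≤ 1+δ for all indices s, t, j. Let W̄ = D^{−1/2} W D^{−1/2} be its normalized matrix. Then for all indices s, t, j one has W̄_{sj}/W̄_{tj} ≤ (1+δ)^{3/2}; in particular, setting δ' = (1+δ)^{3/2} − 1, all same-column entry ratios of W̄ are at most 1+δ'. -/
open Matrix Finset

/-- The symmetrically normalized matrix `D^{-1/2} W D^{-1/2}` where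
`D = diag(row sums of W)`. -/
noncomputable def normalizedMatrix {n : ℕ} (W : Matrix (Fin n) (Fin n) ℝ) :
    Matrix (Fin n) (Fin n) ℝ :=
  fun i j => W i j / (Real.sqrt (∑ k, W i k) * Real.sqrt (∑ k, W j k))

/-- paper's Lemma A.1.  If `W` is a symmetric matrix with all entries
positive whose same-column entry ratios are at most `1 + δ` for `δ ∈ [0,1)`, then the
same-column entry ratios of the normalized matrix `W̄ = D^{-1/2} W D^{-1/2}` are at most
`(1 + δ)^{3/2}`. -/
theorem normalized_ratio_bound {n : ℕ} (δ : ℝ) (hδ0 : 0 ≤ δ) (hδ1 : δ < 1)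
    (W : Matrix (Fin n) (Fin n) ℝ)
    (hsym : W.IsSymm)
    (hpos : ∀ i j, 0 < W i j)
    (hratio : ∀ s t j, W s j / W t j ≤ 1 + δ) :
    ∀ s t j, normalizedMatrix W s j / normalizedMatrix W t j ≤ (1 + δ) ^ ((3 : ℝ) / 2) := by
  intro s t j
  have hd : ∀ i, 0 < ∑ k, W i k := fun i =>
    Finset.sum_pos (fun k _ => hpos i k) ⟨j, Finset.mem_univ j⟩
  have hq : ∀ i, 0 < Real.sqrt (∑ k, W i k) := fun i => Real.sqrt_pos.2 (hd i)
  have h1 : (0 : ℝ) < 1 + δ := by linarith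
  have hsum : ∑ k, W t k ≤ (1 + δ) * ∑ k, W s k := by
    rw [Finset.mul_sum]
    exact Finset.sum_le_sum fun k _ => (div_le_iff₀ (hpos s k)).1 (hratio t s k)
  have hsq : Real.sqrt (∑ k, W t k) / Real.sqrt (∑ k, W s k) ≤ Real.sqrt (1 + δ) := by
    rw [div_le_iff₀ (hq s), ← Real.sqrt_mul h1.le]
    exact Real.sqrt_le_sqrt hsum
  have he : normalizedMatrix W s j / normalizedMatrix W t j
      = (W s j / W t j) * (Real.sqrt (∑ k, W t k) / Real.sqrt (∑ k, W s k)) := by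
    have a := (hq s).ne'
    have b := (hq t).ne'
    have c := (hq j).ne'
    have d := (hpos t j).ne'
    unfold normalizedMatrix
    field_simp
  have hp : (1 + δ) ^ ((3 : ℝ) / 2) = (1 + δ) * Real.sqrt (1 + δ) := by
    rw [Real.sqrt_eq_rpow, show (3 : ℝ) / 2 = 1 + 1 / 2 by norm_num, Real.rpow_add h1,
      Real.rpow_one]
  rw [he, hp]
  exact mul_le_mul (hratio s t j) hsq (div_pos (hq t) (hq s)).le h1.le
end

section
/- Let δ' ≥ 0 and let A ∈ ℝ^{n×n} be a symmetric matrix with all entries positive such that A_{sj}/A_{tj} ≤ 1+δ' for all indices s, t, j. Let v ∈ ℝⁿ be an entrywise-positive eigenvector of A associated with its largest eigenvalue, normalized so that ‖v‖₂ = 1. Then ‖v‖₁² ≥ n²/(1 + (n−1)(1+δ')²). -/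
open Matrix Finset

/-- paper's Lemma A.3.  Let `A` be a symmetric matrix with all entries
positive whose same-column entry ratios are at most `1 + δ'`, and let `v` be an
entrywise-positive unit (in `ℓ²`) eigenvector of `A` associated with its largest
eigenvalue.  Then `‖v‖₁² ≥ n² / (1 + (n-1)(1+δ')²)`. -/
theorem perron_vector_l1_lower_bound {n : ℕ} (δ' : ℝ) (hδ' : 0 ≤ δ')
    (A : Matrix (Fin n) (Fin n) ℝ)
    (hsym : A.IsSymm)
    (hpos : ∀ i j, 0 < A i j)
    (hratio : ∀ s t j, A s j / A t j ≤ 1 + δ')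
    (v : Fin n → ℝ) (hvpos : ∀ i, 0 < v i)
    (hnorm : ∑ i, (v i) ^ 2 = 1)
    (lam : ℝ) (heig : A.mulVec v = lam • v)
    (hmax : ∀ (μ : ℝ) (w : Fin n → ℝ), w ≠ 0 → A.mulVec w = μ • w → μ ≤ lam) :
    (∑ i, |v i|) ^ 2 ≥ (n : ℝ) ^ 2 / (1 + ((n : ℝ) - 1) * (1 + δ') ^ 2) := by
  have hne : (Finset.univ : Finset (Fin n)).Nonempty := by
    by_contra h
    rw [Finset.not_nonempty_iff_eq_empty] at h
    rw [h] at hnorm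
    simp at hnorm
  obtain ⟨t, -, ht⟩ := Finset.exists_min_image Finset.univ v hne
  have hn1 : (1 : ℝ) ≤ n := by
    have : 1 ≤ n := by have := t.2; omega
    exact_mod_cast this
  have hE : ∀ s, ∑ j, A s j * v j = lam * v s := fun s => by
    have := congrFun heig s
    simpa [Matrix.mulVec, dotProduct] using this
  have hlam : 0 < lam := by
    have h1 : 0 < ∑ j, A t j * v j :=
      Finset.sum_pos (fun j _ => mul_pos (hpos t j) (hvpos j)) hne
    rw [hE t] at h1
    exact pos_of_mul_pos_left h1 (hvpos t).le
  have hr : ∀ s, v s ≤ (1 + δ') * v t := fun s => by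
    have h1 : ∑ j, A s j * v j ≤ ∑ j, (1 + δ') * (A t j * v j) := by
      refine Finset.sum_le_sum fun j _ => ?_
      have h2 := (div_le_iff₀ (hpos t j)).1 (hratio s t j)
      have h3 := mul_le_mul_of_nonneg_right h2 (hvpos j).le
      linarith
    rw [← Finset.mul_sum, hE, hE] at h1
    refine le_of_mul_le_mul_left ?_ hlam
    linarith
  have hsum : (n : ℝ) * v t ≤ ∑ i, |v i| := by
    have h1 : ∑ _i : Fin n, v t ≤ ∑ i, |v i| :=
      Finset.sum_le_sum fun i hi => (ht i hi).trans (le_abs_self _)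
    simpa using h1
  have hsq : 1 ≤ v t ^ 2 * (1 + ((n : ℝ) - 1) * (1 + δ') ^ 2) := by
    rw [← Finset.add_sum_erase _ _ (Finset.mem_univ t)] at hnorm
    have h1 : ∑ i ∈ Finset.univ.erase t, v i ^ 2
        ≤ ∑ _i ∈ Finset.univ.erase t, ((1 + δ') * v t) ^ 2 :=
      Finset.sum_le_sum fun i _ => pow_le_pow_left₀ (hvpos i).le (hr i) 2
    rw [Finset.sum_const, Finset.card_erase_of_mem (Finset.mem_univ t), Finset.card_univ,
      Fintype.card_fin, nsmul_eq_mul, Nat.cast_sub (by exact_mod_cast hn1), Nat.cast_one] at h1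
    linarith
  have hD : 0 < 1 + ((n : ℝ) - 1) * (1 + δ') ^ 2 := by
    have := mul_nonneg (sub_nonneg.2 hn1) (sq_nonneg (1 + δ'))
    linarith
  rw [ge_iff_le, div_le_iff₀ hD]
  have h4 : ((n : ℝ) * v t) ^ 2 ≤ (∑ i, |v i|) ^ 2 :=
    pow_le_pow_left₀ (mul_nonneg (by linarith) (hvpos t).le) hsum 2
  have h5 := mul_le_mul_of_nonneg_right h4 hD.le
  have h6 := mul_le_mul_of_nonneg_left hsq (sq_nonneg (n : ℝ))
  linarith
end

section
/- Let A ∈ ℝ^{n×n} be a symmetric matrix with all entries positive and let v ∈ ℝⁿ be an entrywise-positive eigenvector of A associated with its largest eigenvalue. Then the ratio of any two entries of v is bounded by the maximal same-column entry ratio of A: max_{i,j} vᵢ/vⱼ ≤ max_{j,s,t} A_{sj}/A_{tj}. -/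
open Matrix Finset

/-- key fact used in the paper's Lemmas A.3 and A.8.  Let `A` be a
symmetric matrix with all entries positive and let `v` be an entrywise-positive
eigenvector of `A` associated with its largest eigenvalue.  Then the ratio of any two
entries of `v` is bounded by the maximal same-column entry ratio of `A`:
`max_{i,j} vᵢ/vⱼ ≤ max_{j,s,t} A_{sj}/A_{tj}` (stated as: any upper bound `c` on all
same-column entry ratios of `A` is an upper bound on all entry ratios of `v`). -/
theorem perron_vector_entry_ratio_bound {n : ℕ}
    (A : Matrix (Fin n) (Fin n) ℝ)
    (hsym : A.IsSymm)
    (hpos : ∀ i j, 0 < A i j)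
    (v : Fin n → ℝ) (hvpos : ∀ i, 0 < v i)
    (lam : ℝ) (heig : A.mulVec v = lam • v)
    (hmax : ∀ (μ : ℝ) (w : Fin n → ℝ), w ≠ 0 → A.mulVec w = μ • w → μ ≤ lam) :
    ∀ c : ℝ, (∀ s t j, A s j / A t j ≤ c) → ∀ i j, v i / v j ≤ c := by
  intro c hc i j
  have h : ∀ k, ∑ l, A k l * v l = lam * v k := fun k => by
    have := congrFun heig k
    simpa [Matrix.mulVec, dotProduct] using this
  have hl : 0 < lam := by
    have h1 : 0 < ∑ l, A i l * v l :=
      Finset.sum_pos (fun l _ => mul_pos (hpos i l) (hvpos l)) ⟨i, Finset.mem_univ i⟩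
    rw [h i] at h1
    exact pos_of_mul_pos_left h1 (hvpos i).le
  rw [div_le_iff₀ (hvpos j)]
  have h2 : ∑ l, A i l * v l ≤ c * ∑ l, A j l * v l := by
    rw [Finset.mul_sum]
    refine Finset.sum_le_sum fun l _ => ?_
    have h3 := (div_le_iff₀ (hpos j l)).1 (hc i j l)
    have h4 := mul_le_mul_of_nonneg_right h3 (hvpos l).le
    linarith
  rw [h i, h j] at h2
  refine le_of_mul_le_mul_left ?_ hl
  linarith
end

section
/- Let δ' ≥ 0 and let A ∈ ℝ^{n×n} be a symmetric matrix with all entries positive whose largest eigenvalue equals 1 and such that A_{sj}/A_{tj} ≤ 1+δ' for all indices s, t, j. Then the sum of the squares of all eigenvalues of A (equivalently, the squared Frobenius norm ‖A‖_F²) satisfies Σᵢ λᵢ² ≤ (1 + (n−1)(1+δ')²)(1+δ')² / n. -/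
open Matrix Finset

/-- paper's Lemma A.4.  Let `A` be a symmetric matrix with all entries
positive, largest eigenvalue equal to `1`, and same-column entry ratios at most `1 + δ'`.
Then the sum of the squares of all eigenvalues of `A` (listed in decreasing order with
multiplicity via a spectral decomposition) is at most
`(1 + (n-1)(1+δ')²)(1+δ')² / n`. -/
theorem sum_sq_eigenvalues_bound {n : ℕ} (hn : 0 < n) (δ' : ℝ) (hδ' : 0 ≤ δ')
    (A : Matrix (Fin n) (Fin n) ℝ)
    (hsym : A.IsSymm)
    (hpos : ∀ i j, 0 < A i j)
    (hratio : ∀ s t j, A s j / A t j ≤ 1 + δ')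
    (μ : Fin n → ℝ) (hmono : Antitone μ)
    (U : Matrix (Fin n) (Fin n) ℝ) (hU : U * Uᵀ = 1)
    (hdecomp : A = U * Matrix.diagonal μ * Uᵀ)
    (htop : μ ⟨0, hn⟩ = 1) :
    ∑ i, (μ i) ^ 2 ≤ (1 + ((n : ℝ) - 1) * (1 + δ') ^ 2) * (1 + δ') ^ 2 / n := by
  have hUt : Uᵀ * U = 1 := mul_eq_one_comm.mp hU
  have hμ : ∀ k, μ k ≤ 1 := fun k => by
    rw [← htop]; exact hmono (Fin.mk_le_of_le_val (Nat.zero_le _))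
  have hnR : (0 : ℝ) < n := by exact_mod_cast hn
  have hA : ∀ s t j, A s j ≤ (1 + δ') * A t j := fun s t j =>
    (div_le_iff₀ (hpos t j)).mp (hratio s t j)
  -- the squared Frobenius norm
  have hfrob : ∑ i, (μ i) ^ 2 = ∑ j, ∑ i, A i j ^ 2 := by
    have h1 : (Aᵀ * A).trace = ∑ j, ∑ i, A i j ^ 2 := by
      simp [Matrix.trace, Matrix.mul_apply, sq]
    rw [← h1, hsym.eq]
    have h2 : A * A = U * (Matrix.diagonal μ * Matrix.diagonal μ) * Uᵀ := by
      calc A * A = (U * Matrix.diagonal μ * Uᵀ) * (U * Matrix.diagonal μ * Uᵀ) := by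
            rw [← hdecomp]
        _ = U * Matrix.diagonal μ * (Uᵀ * U) * Matrix.diagonal μ * Uᵀ := by
            simp only [Matrix.mul_assoc]
        _ = _ := by rw [hUt]; simp only [Matrix.mul_assoc, Matrix.one_mul]
    rw [h2, Matrix.trace_mul_comm, ← Matrix.mul_assoc, hUt, Matrix.one_mul,
      Matrix.diagonal_mul_diagonal, Matrix.trace_diagonal]
    simp [sq]
  -- column sums
  obtain ⟨c, hc⟩ : ∃ c : Fin n → ℝ, ∀ j, c j = ∑ i, A i j := ⟨_, fun _ => rfl⟩
  have hcpos : ∀ j, 0 ≤ c j := fun j => by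
    rw [hc]; exact Finset.sum_nonneg fun i _ => (hpos i j).le
  have hS : ∑ j, c j ≤ n := by
    have e1 : ∀ M : Matrix (Fin n) (Fin n) ℝ,
        (1 : Fin n → ℝ) ⬝ᵥ (M *ᵥ 1) = ∑ i, ∑ j, M i j := by
      intro M; simp [dotProduct, Matrix.mulVec]
    have e2 : ∀ d : Fin n → ℝ, (1 : Fin n → ℝ) ⬝ᵥ ((U * Matrix.diagonal d * Uᵀ) *ᵥ 1)
        = ∑ k, d k * ((Uᵀ *ᵥ 1) k) ^ 2 := by
      intro d
      rw [← Matrix.mulVec_mulVec, ← Matrix.mulVec_mulVec, Matrix.dotProduct_mulVec,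
        ← Matrix.mulVec_transpose]
      simp only [dotProduct, Matrix.mulVec_diagonal]
      exact Finset.sum_congr rfl fun k _ => by ring
    have e3 := e2 μ
    have e4 := e2 1
    rw [← hdecomp, e1] at e3
    have e5 : Matrix.diagonal (1 : Fin n → ℝ) = 1 := Matrix.diagonal_one
    rw [e5, Matrix.mul_one, hU, Matrix.one_mulVec] at e4
    have e6 : (1 : Fin n → ℝ) ⬝ᵥ 1 = n := by simp [dotProduct]
    rw [e6] at e4
    simp only [hc]
    rw [Finset.sum_comm, e3, e4]
    exact Finset.sum_le_sum fun k _ => mul_le_mul_of_nonneg_right (hμ k) (sq_nonneg _)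
  have hcr : ∀ s t, c s ≤ (1 + δ') * c t := fun s t => by
    rw [hc, hc, Finset.mul_sum]
    refine Finset.sum_le_sum fun i _ => ?_
    rw [← hsym.apply i s, ← hsym.apply i t]
    exact hA s t i
  have hAc : ∀ i j, n * A i j ≤ (1 + δ') * c j := fun i j => by
    have := Finset.sum_le_sum (s := Finset.univ) fun t (_ : t ∈ Finset.univ) => hA i t j
    rw [← Finset.mul_sum, ← hc] at this
    simpa using this
  haveI : Nonempty (Fin n) := ⟨⟨0, hn⟩⟩
  obtain ⟨m, hm⟩ := Finite.exists_min c
  have hm1 : c m ≤ 1 := by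
    have := Finset.sum_le_sum (s := Finset.univ) fun t (_ : t ∈ Finset.univ) => hm t
    simp only [Finset.sum_const, Finset.card_univ, Fintype.card_fin, nsmul_eq_mul] at this
    by_contra h
    push Not at h
    nlinarith
  have hc2 : ∑ j, c j ^ 2 ≤ 1 + ((n : ℝ) - 1) * (1 + δ') ^ 2 := by
    rw [← Finset.add_sum_erase _ _ (Finset.mem_univ m)]
    refine add_le_add (pow_le_one₀ (hcpos m) hm1) ?_
    have : ∑ j ∈ Finset.univ.erase m, c j ^ 2 ≤ ∑ j ∈ Finset.univ.erase m, (1 + δ') ^ 2 := by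
      refine Finset.sum_le_sum fun j _ => pow_le_pow_left₀ (hcpos j) ?_ 2
      exact (hcr j m).trans (mul_le_of_le_one_right (by linarith) hm1)
    refine this.trans_eq ?_
    rw [Finset.sum_const, Finset.card_erase_of_mem (Finset.mem_univ m), nsmul_eq_mul,
      Finset.card_univ, Fintype.card_fin, Nat.cast_sub hn, Nat.cast_one]
  have hcol : ∀ j, ∑ i, A i j ^ 2 ≤ (1 + δ') ^ 2 * c j ^ 2 / n := fun j => by
    have : ∑ i, A i j ^ 2 ≤ ∑ i : Fin n, ((1 + δ') * c j / n) ^ 2 := by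
      refine Finset.sum_le_sum fun i _ => pow_le_pow_left₀ (hpos i j).le ?_ 2
      rw [le_div_iff₀ hnR, mul_comm]; exact hAc i j
    refine this.trans_eq ?_
    rw [Finset.sum_const, Finset.card_univ, Fintype.card_fin, nsmul_eq_mul]
    field_simp
  rw [hfrob]
  calc ∑ j, ∑ i, A i j ^ 2 ≤ ∑ j, (1 + δ') ^ 2 * c j ^ 2 / n :=
        Finset.sum_le_sum fun j _ => hcol j
    _ = (∑ j, c j ^ 2) * (1 + δ') ^ 2 / n := by
        rw [← Finset.sum_div, ← Finset.mul_sum, mul_comm]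
    _ ≤ _ := by gcongr
end

section
/- Let δ' ≥ 0 and let A ∈ ℝ^{n×n} be a symmetric matrix with all entries positive whose largest eigenvalue equals 1 and such that A_{sj}/A_{tj} ≤ 1+δ' for all indices s, t, j. List the eigenvalues of A in decreasing order λ₁ ≥ λ₂ ≥ … ≥ λₙ. Then for every i ≥ 2, |λᵢ| ≤ sqrt( (1 + (n−1)(1+δ')²)(1+δ')² / n − 1 ). -/
open Matrix Finset

/-- exact form of the paper's Corollary A.5.  Let `A` be a symmetric
matrix with all entries positive, largest eigenvalue equal to `1`, and same-column entry
ratios at most `1 + δ'`.  Listing the eigenvalues of `A` in decreasing order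
`λ₁ ≥ λ₂ ≥ … ≥ λₙ` (via a spectral decomposition), every non-leading eigenvalue
satisfies `|λᵢ| ≤ sqrt((1 + (n-1)(1+δ')²)(1+δ')²/n − 1)` for `i ≥ 2`. -/
theorem nonleading_eigenvalue_bound {n : ℕ} (hn : 0 < n) (δ' : ℝ) (hδ' : 0 ≤ δ')
    (A : Matrix (Fin n) (Fin n) ℝ)
    (hsym : A.IsSymm)
    (hpos : ∀ i j, 0 < A i j)
    (hratio : ∀ s t j, A s j / A t j ≤ 1 + δ')
    (μ : Fin n → ℝ) (hmono : Antitone μ)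
    (U : Matrix (Fin n) (Fin n) ℝ) (hU : U * Uᵀ = 1)
    (hdecomp : A = U * Matrix.diagonal μ * Uᵀ)
    (htop : μ ⟨0, hn⟩ = 1) :
    ∀ i : Fin n, 1 ≤ (i : ℕ) →
      |μ i| ≤ Real.sqrt ((1 + ((n : ℝ) - 1) * (1 + δ') ^ 2) * (1 + δ') ^ 2 / n - 1) := by
  intro i hi
  have hUt : Uᵀ * U = 1 := mul_eq_one_comm.mp hU
  have hr : (1 : ℝ) ≤ 1 + δ' := by linarith
  set r : ℝ := 1 + δ' with hrdef
  have hn' : (0 : ℝ) < n := by exact_mod_cast hn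
  have hcol : ∀ s t j, A s j ≤ r * A t j := fun s t j =>
    (div_le_iff₀ (hpos t j)).mp (hratio s t j)
  have hrow : ∀ t j k, A t j ≤ r * A t k := fun t j k => by
    have := hcol j k t
    rwa [hsym.apply t j, hsym.apply t k] at this
  have hμ1 : ∀ k, μ k ≤ 1 := fun k => by
    rw [← htop]; exact hmono (Fin.mk_le_of_le_val (Nat.zero_le _))
  -- Frobenius norm
  have hfrob : ∑ s, ∑ j, A s j ^ 2 = ∑ k, μ k ^ 2 := by
    have h1 : (A * Aᵀ).trace = ∑ s, ∑ j, A s j ^ 2 := by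
      simp [Matrix.trace, Matrix.mul_apply, sq]
    have h2 : A * Aᵀ = U * (Matrix.diagonal μ * Matrix.diagonal μ) * Uᵀ := by
      rw [hsym.eq, hdecomp]
      calc U * diagonal μ * Uᵀ * (U * diagonal μ * Uᵀ)
          = U * diagonal μ * (Uᵀ * U) * diagonal μ * Uᵀ := by simp only [Matrix.mul_assoc]
        _ = _ := by rw [hUt]; simp only [Matrix.mul_assoc, Matrix.mul_one, Matrix.one_mul]
    rw [← h1, h2, Matrix.trace_mul_comm, ← Matrix.mul_assoc, hUt, Matrix.one_mul,
      Matrix.diagonal_mul_diagonal, Matrix.trace_diagonal]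
    simp [sq]
  -- Rayleigh
  have hsum : ∑ s, ∑ j, A s j ≤ n := by
    have hn1 : ∑ k, (∑ s, U s k) ^ 2 = n := by
      have : ∀ s t, ∑ k, U s k * U t k = if s = t then (1 : ℝ) else 0 := fun s t => by
        have := congrFun (congrFun hU s) t
        simpa [Matrix.mul_apply, Matrix.one_apply] using this
      calc ∑ k, (∑ s, U s k) ^ 2 = ∑ k, ∑ s, ∑ t, U s k * U t k := by
            simp only [sq, Finset.sum_mul_sum]
        _ = ∑ s, ∑ t, ∑ k, U s k * U t k := by
            rw [Finset.sum_comm]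
            exact Finset.sum_congr rfl fun s _ => Finset.sum_comm
        _ = n := by simp [this]
    have hA : ∑ s, ∑ j, A s j = ∑ k, μ k * (∑ s, U s k) ^ 2 := by
      have hent : ∀ s j, A s j = ∑ k, μ k * (U s k * U j k) := fun s j => by
        rw [hdecomp, Matrix.mul_apply]
        refine Finset.sum_congr rfl fun k _ => ?_
        rw [Matrix.mul_diagonal, Matrix.transpose_apply]; ring
      calc ∑ s, ∑ j, A s j = ∑ s, ∑ j, ∑ k, μ k * (U s k * U j k) := by simp only [← hent]
        _ = ∑ k, ∑ s, ∑ j, μ k * (U s k * U j k) := by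
            rw [Finset.sum_comm (s := (univ : Finset (Fin n))) (t := univ)
              (f := fun k s => ∑ j, μ k * (U s k * U j k))]
            exact Finset.sum_congr rfl fun s _ => Finset.sum_comm
        _ = _ := by simp only [sq, Finset.sum_mul_sum]; simp only [Finset.mul_sum]
    rw [hA, ← hn1]
    exact Finset.sum_le_sum fun k _ => mul_le_of_le_one_left (sq_nonneg _) (hμ1 k)
  obtain ⟨t, ht⟩ : ∃ t, ∑ j, A t j ≤ 1 := by
    by_contra! h
    have : ∑ _s : Fin n, (1 : ℝ) < ∑ s, ∑ j, A s j :=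
      Finset.sum_lt_sum_of_nonempty ⟨i, Finset.mem_univ _⟩ fun s _ => h s
    simp at this
    linarith
  have hT : ∑ j, A t j ^ 2 ≤ r ^ 2 / n := by
    have hb : ∀ j, A t j ≤ r / n := fun j => by
      rw [le_div_iff₀ hn']
      have : ∑ _k : Fin n, A t j ≤ ∑ k, r * A t k := Finset.sum_le_sum fun k _ => hrow t j k
      rw [← Finset.mul_sum] at this
      simp at this
      nlinarith
    calc ∑ j, A t j ^ 2 ≤ ∑ j, (r / n) * A t j := Finset.sum_le_sum fun j _ => by
          rw [sq]; exact mul_le_mul_of_nonneg_right (hb j) (hpos t j).le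
      _ = (r / n) * ∑ j, A t j := by rw [Finset.mul_sum]
      _ ≤ r / n := mul_le_of_le_one_right (by positivity) ht
      _ ≤ r ^ 2 / n := by gcongr; nlinarith
  have hF : ∑ s, ∑ j, A s j ^ 2 ≤ (1 + ((n : ℝ) - 1) * r ^ 2) * ∑ j, A t j ^ 2 := by
    rw [← Finset.add_sum_erase _ _ (Finset.mem_univ t), add_mul, one_mul]
    gcongr
    calc ∑ s ∈ univ.erase t, ∑ j, A s j ^ 2
        ≤ ∑ s ∈ univ.erase t, r ^ 2 * ∑ j, A t j ^ 2 := by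
          refine Finset.sum_le_sum fun s _ => ?_
          rw [Finset.mul_sum]
          refine Finset.sum_le_sum fun j _ => ?_
          rw [← mul_pow]
          exact pow_le_pow_left₀ (hpos s j).le (hcol s t j) 2
      _ = _ := by
          rw [Finset.sum_const, Finset.card_erase_of_mem (Finset.mem_univ t), nsmul_eq_mul]
          simp [Nat.cast_sub (show 1 ≤ n from hn), mul_assoc]
  have hc : (0 : ℝ) ≤ 1 + ((n : ℝ) - 1) * r ^ 2 := by
    have : (1 : ℝ) ≤ n := by exact_mod_cast hn
    have := mul_nonneg (sub_nonneg.mpr this) (sq_nonneg r)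
    linarith
  have hpair : 1 + μ i ^ 2 ≤ ∑ k, μ k ^ 2 := by
    have hne : (⟨0, hn⟩ : Fin n) ≠ i := fun h => by
      rw [← h] at hi; simp at hi
    have := Finset.sum_le_sum_of_subset_of_nonneg (f := fun k => μ k ^ 2)
      (Finset.subset_univ {(⟨0, hn⟩ : Fin n), i}) (fun _ _ _ => sq_nonneg _)
    rw [Finset.sum_pair hne, htop] at this
    simpa using this
  apply Real.abs_le_sqrt
  have := mul_le_mul_of_nonneg_left hT hc
  rw [mul_div_assoc]
  linarith
end

section
/- Let δ' ≥ 0 and let A ∈ ℝ^{n×n} be a symmetric matrix with all entries positive whose largest eigenvalue equals 1 and such that A_{sj}/A_{tj} ≤ 1+δ' for all indices s, t, j. List the eigenvalues of A in decreasing order λ₁ ≥ λ₂ ≥ … ≥ λₙ. Then for every p with 2 ≤ p ≤ n, Σ_{i=2}^{p} |λᵢ| ≤ sqrt(p−1) · sqrt( (1 + (n−1)(1+δ')²)(1+δ')² / n − 1 ). -/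
open Matrix Finset

/-- exact form of the paper's Corollary A.6.  Let `A` be a symmetric
matrix with all entries positive, largest eigenvalue equal to `1`, and same-column entry
ratios at most `1 + δ'`.  Listing the eigenvalues of `A` in decreasing order
`λ₁ ≥ λ₂ ≥ … ≥ λₙ` (via a spectral decomposition), for every `2 ≤ p ≤ n` the sum of
the absolute values of the eigenvalues `λ₂, …, λ_p` is at most
`sqrt(p−1) · sqrt((1 + (n-1)(1+δ')²)(1+δ')²/n − 1)`.
(The eigenvalue `λᵢ` in 1-based indexing is `μ` at the 0-based index `i - 1`.) -/
theorem sum_nonleading_eigenvalues_bound {n : ℕ} (hn : 0 < n) (δ' : ℝ) (hδ' : 0 ≤ δ')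
    (A : Matrix (Fin n) (Fin n) ℝ)
    (hsym : A.IsSymm)
    (hpos : ∀ i j, 0 < A i j)
    (hratio : ∀ s t j, A s j / A t j ≤ 1 + δ')
    (μ : Fin n → ℝ) (hmono : Antitone μ)
    (U : Matrix (Fin n) (Fin n) ℝ) (hU : U * Uᵀ = 1)
    (hdecomp : A = U * Matrix.diagonal μ * Uᵀ)
    (htop : μ ⟨0, hn⟩ = 1) :
    ∀ p : ℕ, 2 ≤ p → p ≤ n →
      ∑ i ∈ Finset.univ.filter (fun i : Fin n => 1 ≤ (i : ℕ) ∧ (i : ℕ) < p), |μ i| ≤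
        Real.sqrt ((p : ℝ) - 1) *
          Real.sqrt ((1 + ((n : ℝ) - 1) * (1 + δ') ^ 2) * (1 + δ') ^ 2 / n - 1) := by
  intro p hp hpn
  have hn' : (0:ℝ) < n := by exact_mod_cast hn
  have hU' : Uᵀ * U = 1 := mul_eq_one_comm.mp hU
  obtain ⟨r, hr⟩ : ∃ r : ℝ, r = 1 + δ' := ⟨_, rfl⟩
  rw [← hr] at hratio ⊢
  have hr1 : 1 ≤ r := by linarith
  have hμ : ∀ i, μ i ≤ 1 := fun i => htop ▸ hmono (Fin.mk_le_of_le_val (Nat.zero_le _))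
  -- total sum at most n
  have hS : ∑ i, ∑ j, A i j ≤ n := by
    have e1 : ∑ i, ∑ j, A i j = ∑ k, μ k * (∑ i, U i k) ^ 2 := by
      have : ∀ i j, A i j = ∑ k, U i k * μ k * U j k := by
        intro i j
        rw [hdecomp, Matrix.mul_apply]
        simp [Matrix.mul_diagonal]
      simp_rw [this]
      calc _ = ∑ i, ∑ k, ∑ j, U i k * μ k * U j k :=
            Finset.sum_congr rfl fun i _ => Finset.sum_comm
        _ = ∑ k, ∑ i, ∑ j, U i k * μ k * U j k := Finset.sum_comm
        _ = _ := by
            refine Finset.sum_congr rfl fun k _ => ?_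
            rw [sq, Finset.sum_mul_sum, Finset.mul_sum]
            refine Finset.sum_congr rfl fun i _ => ?_
            rw [Finset.mul_sum]
            exact Finset.sum_congr rfl fun j _ => by ring
    have e2 : ∑ k, (∑ i, U i k) ^ 2 = n := by
      calc ∑ k, (∑ i, U i k) ^ 2 = ∑ k, ∑ i, ∑ j, U i k * U j k :=
            Finset.sum_congr rfl fun k _ => by rw [sq, Finset.sum_mul_sum]
        _ = ∑ i, ∑ k, ∑ j, U i k * U j k := Finset.sum_comm
        _ = ∑ i, ∑ j, ∑ k, U i k * U j k :=
            Finset.sum_congr rfl fun i _ => Finset.sum_comm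
        _ = ∑ i, ∑ j, (U * Uᵀ) i j := by simp [Matrix.mul_apply]
        _ = n := by rw [hU]; simp [Matrix.one_apply]
    rw [e1, ← e2]
    exact Finset.sum_le_sum fun k _ => mul_le_of_le_one_left (sq_nonneg _) (hμ k)
  have h1 : ∀ s t j, A s j ≤ r * A t j := fun s t j =>
    (div_le_iff₀ (hpos t j)).mp (hratio s t j)
  have h2 : ∀ i j k l, A i j ≤ r ^ 2 * A k l := by
    intro i j k l
    have a := h1 i l j
    have b := h1 j k l
    rw [hsym.apply j l] at a
    nlinarith
  have h3 : ∀ i j, A i j ≤ r ^ 2 / n := by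
    intro i j
    have : ∑ k : Fin n, ∑ l : Fin n, A i j ≤ ∑ k, ∑ l, r ^ 2 * A k l :=
      Finset.sum_le_sum fun k _ => Finset.sum_le_sum fun l _ => h2 i j k l
    simp_rw [← Finset.mul_sum] at this
    simp only [Finset.sum_const, Finset.card_univ, Fintype.card_fin, nsmul_eq_mul] at this
    rw [le_div_iff₀ hn']
    have h4 : r ^ 2 * ∑ k, ∑ l, A k l ≤ r ^ 2 * n := by gcongr
    have h5 : n * (A i j * n) ≤ n * r ^ 2 := by linarith
    exact le_of_mul_le_mul_left h5 hn'
  have hF : ∑ i, ∑ j, A i j ^ 2 ≤ r ^ 2 := by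
    calc ∑ i, ∑ j, A i j ^ 2 ≤ ∑ i, ∑ j, r ^ 2 / n * A i j :=
          Finset.sum_le_sum fun i _ => Finset.sum_le_sum fun j _ => by
            rw [sq (A i j)]; exact mul_le_mul_of_nonneg_right (h3 i j) (hpos i j).le
      _ = r ^ 2 / n * ∑ i, ∑ j, A i j := by simp_rw [← Finset.mul_sum]
      _ ≤ r ^ 2 / n * n := by gcongr
      _ = r ^ 2 := by field_simp
  have hT : ∑ i, ∑ j, A i j ^ 2 = ∑ i, μ i ^ 2 := by
    have e : ∑ i, ∑ j, A i j ^ 2 = (A * Aᵀ).trace := by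
      simp [Matrix.trace, Matrix.mul_apply, sq]
    have e' : A * Aᵀ = U * (Matrix.diagonal μ * Matrix.diagonal μ * Uᵀ) := by
      rw [hsym.eq, hdecomp]
      calc _ = U * Matrix.diagonal μ * (Uᵀ * U) * Matrix.diagonal μ * Uᵀ := by
            simp only [Matrix.mul_assoc]
        _ = _ := by rw [hU']; simp only [Matrix.mul_assoc, Matrix.mul_one]
    rw [e, e', Matrix.trace_mul_comm, Matrix.mul_assoc, hU', Matrix.mul_one,
      Matrix.diagonal_mul_diagonal, Matrix.trace_diagonal]
    simp [sq]
  set s := Finset.univ.filter (fun i : Fin n => 1 ≤ (i : ℕ) ∧ (i : ℕ) < p) with hs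
  have hcard : (s.card : ℝ) ≤ (p : ℝ) - 1 := by
    have : s.card ≤ (Finset.Ico 1 p).card :=
      Finset.card_le_card_of_injOn (fun i => (i : ℕ))
        (fun i hi => by simpa [hs] using hi) (Fin.val_injective.injOn)
    rw [Nat.card_Ico] at this
    have h6 : s.card + 1 ≤ p := by omega
    have h7 : (s.card : ℝ) + 1 ≤ p := by exact_mod_cast h6
    linarith
  have h0 : (⟨0, hn⟩ : Fin n) ∉ s := by simp [hs]
  have hsq : ∑ i ∈ s, μ i ^ 2 ≤ r ^ 2 - 1 := by
    have : ∑ i ∈ insert ⟨0, hn⟩ s, μ i ^ 2 ≤ ∑ i, μ i ^ 2 :=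
      Finset.sum_le_sum_of_subset_of_nonneg (Finset.subset_univ _) fun i _ _ => sq_nonneg _
    rw [Finset.sum_insert h0, htop] at this
    linarith
  have hB : r ^ 2 ≤ (1 + ((n : ℝ) - 1) * r ^ 2) * r ^ 2 / n := by
    rw [le_div_iff₀ hn']
    have hn1 : (1:ℝ) ≤ n := by exact_mod_cast hn
    have hr2 : 1 ≤ r ^ 2 := one_le_pow₀ hr1
    nlinarith [mul_nonneg (mul_nonneg (sub_nonneg.2 hn1) (sub_nonneg.2 hr2)) (sq_nonneg r)]
  have hp1 : (0:ℝ) ≤ (p:ℝ) - 1 := le_trans (Nat.cast_nonneg _) hcard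
  rw [← Real.sqrt_mul hp1]
  apply Real.le_sqrt_of_sq_le
  calc (∑ i ∈ s, |μ i|) ^ 2 ≤ s.card * ∑ i ∈ s, |μ i| ^ 2 := sq_sum_le_card_mul_sum_sq
    _ = s.card * ∑ i ∈ s, μ i ^ 2 := by simp_rw [sq_abs]
    _ ≤ _ := mul_le_mul hcard (by linarith) (Finset.sum_nonneg fun i _ => sq_nonneg _) hp1
end

section
/- Let δ' ≥ 0 and let A ∈ ℝ^{n×n} be a symmetric matrix with all entries positive such that A_{sj}/A_{tj} ≤ 1+δ' for all indices s, t, j. Let v ∈ ℝⁿ be an entrywise-positive eigenvector of A associated with its largest eigenvalue, normalized so that ‖v‖₂ = 1. Then min_i vᵢ ≥ 1/sqrt(1 + (n−1)(1+δ')²) and max_i vᵢ ≤ 1/sqrt(1 + (n−1)(1+δ')^{−2}). -/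
open Matrix Finset

/-- paper's Lemma A.8.  Let `A` be a symmetric matrix with all entries
positive whose same-column entry ratios are at most `1 + δ'`, and let `v` be an
entrywise-positive unit (in `ℓ²`) eigenvector of `A` associated with its largest
eigenvalue.  Then every entry of `v` is at least `1/sqrt(1 + (n−1)(1+δ')²)` and at most
`1/sqrt(1 + (n−1)/(1+δ')²)`. -/
theorem perron_vector_entry_bounds {n : ℕ} (δ' : ℝ) (hδ' : 0 ≤ δ')
    (A : Matrix (Fin n) (Fin n) ℝ)
    (hsym : A.IsSymm)
    (hpos : ∀ i j, 0 < A i j)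
    (hratio : ∀ s t j, A s j / A t j ≤ 1 + δ')
    (v : Fin n → ℝ) (hvpos : ∀ i, 0 < v i)
    (hnorm : ∑ i, (v i) ^ 2 = 1)
    (lam : ℝ) (heig : A.mulVec v = lam • v)
    (hmax : ∀ (μ : ℝ) (w : Fin n → ℝ), w ≠ 0 → A.mulVec w = μ • w → μ ≤ lam) :
    (∀ i, 1 / Real.sqrt (1 + ((n : ℝ) - 1) * (1 + δ') ^ 2) ≤ v i) ∧
    (∀ i, v i ≤ 1 / Real.sqrt (1 + ((n : ℝ) - 1) / (1 + δ') ^ 2)) := by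
  have hc : 0 < 1 + δ' := by linarith
  have key : ∀ s t, v s ≤ (1 + δ') * v t := by
    intro s t
    have hs : ∀ s, ∑ j, A s j * v j = lam * v s := by
      intro s
      have := congrFun heig s
      simpa [Matrix.mulVec, dotProduct] using this
    have hlam : 0 < lam := by
      have h1 : 0 < ∑ j, A s j * v j :=
        Finset.sum_pos (fun j _ => mul_pos (hpos s j) (hvpos j)) ⟨s, Finset.mem_univ s⟩
      rw [hs] at h1
      exact pos_of_mul_pos_left h1 (hvpos s).le
    have h2 : ∑ j, A s j * v j ≤ (1 + δ') * ∑ j, A t j * v j := by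
      rw [Finset.mul_sum]
      refine Finset.sum_le_sum fun j _ => ?_
      have h3 := (div_le_iff₀ (hpos t j)).1 (hratio s t j)
      calc A s j * v j ≤ ((1 + δ') * A t j) * v j :=
            mul_le_mul_of_nonneg_right h3 (hvpos j).le
        _ = _ := by ring
    rw [hs, hs] at h2
    have h4 : lam * v s ≤ lam * ((1 + δ') * v t) := by linarith
    exact le_of_mul_le_mul_left h4 hlam
  have hsplit : ∀ i, v i ^ 2 + ∑ j ∈ Finset.univ.erase i, v j ^ 2 = 1 := by
    intro i
    rw [← hnorm]
    exact Finset.add_sum_erase _ (fun j => v j ^ 2) (Finset.mem_univ i)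
  have hcard : ∀ i : Fin n, ((Finset.univ.erase i).card : ℝ) = (n : ℝ) - 1 := by
    intro i
    have h := Finset.card_erase_add_one (Finset.mem_univ i)
    rw [Finset.card_univ, Fintype.card_fin] at h
    have h' : (((Finset.univ.erase i).card : ℝ)) + 1 = n := by exact_mod_cast h
    linarith
  have hn : ∀ _ : Fin n, (0 : ℝ) ≤ (n : ℝ) - 1 := fun i => by
    rw [← hcard i]; positivity
  constructor
  · intro i
    have hD : 0 < 1 + ((n : ℝ) - 1) * (1 + δ') ^ 2 := by
      have := hn i
      positivity
    have h1 : ∑ j ∈ Finset.univ.erase i, v j ^ 2 ≤ ((n : ℝ) - 1) * ((1 + δ') * v i) ^ 2 := by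
      rw [← hcard i, ← nsmul_eq_mul]
      exact Finset.sum_le_card_nsmul _ _ _ fun j _ =>
        pow_le_pow_left₀ (hvpos j).le (key j i) 2
    have h2 := hsplit i
    rw [div_le_iff₀ (Real.sqrt_pos.2 hD)]
    rw [← abs_of_pos (mul_pos (hvpos i) (Real.sqrt_pos.2 hD)), ← Real.sqrt_sq_eq_abs,
      Real.one_le_sqrt, mul_pow, Real.sq_sqrt hD.le]
    nlinarith
  · intro i
    have hD : 0 < 1 + ((n : ℝ) - 1) / (1 + δ') ^ 2 := by
      have := hn i
      positivity
    have h1 : ((n : ℝ) - 1) * (v i / (1 + δ')) ^ 2 ≤ ∑ j ∈ Finset.univ.erase i, v j ^ 2 := by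
      rw [← hcard i, ← nsmul_eq_mul]
      refine Finset.card_nsmul_le_sum _ _ _ fun j _ =>
        pow_le_pow_left₀ (div_nonneg (hvpos i).le hc.le) ?_ 2
      rw [div_le_iff₀ hc, mul_comm]
      exact key i j
    have h2 := hsplit i
    rw [le_div_iff₀ (Real.sqrt_pos.2 hD)]
    rw [← abs_of_pos (mul_pos (hvpos i) (Real.sqrt_pos.2 hD)), ← Real.sqrt_sq_eq_abs,
      Real.sqrt_le_iff.trans (and_iff_right_of_imp fun _ => zero_le_one), one_pow, mul_pow, Real.sq_sqrt hD.le]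
    have h3 : v i ^ 2 * (1 + ((n : ℝ) - 1) / (1 + δ') ^ 2)
        = v i ^ 2 + ((n : ℝ) - 1) * (v i / (1 + δ')) ^ 2 := by
      rw [div_pow]; ring
    linarith
end

section
/- There is an absolute constant C > 0 with the following property. Let K̄ ≥ 1 divide n, let δ, ξ ∈ [0,1), and let W ∈ ℝ^{n×n} be a symmetric matrix partitioned into K̄ × K̄ blocks according to K̄ groups of indices each of size n/K̄, such that every entry of W inside a diagonal block lies in [1/(1+δ), 1+δ] and every entry outside the diagonal blocks is nonnegative and at most ξ times every entry inside the diagonal blocks. Let Ã be the normalized matrix of W, and let Ā be the normalized matrix of the matrix obtained from W by setting all entries outside the diagonal blocks to zero. Then ‖Ã − Ā‖_F ≤ C · K̄^{5/2} (1+δ)² ξ. -/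
open Matrix Finset

/-- Squared Frobenius norm of a real matrix. -/
def frobSq {m k : ℕ} (A : Matrix (Fin m) (Fin k) ℝ) : ℝ :=
  ∑ i, ∑ j, (A i j) ^ 2

lemma aux_in (w P Q c m t : ℝ) (hw : 0 ≤ w) (hwt : w ≤ t) (ht : 0 < t) (hm : 0 < m)
    (hP : m / t ≤ P) (hPQ : P ≤ Q) (hQ : Q ≤ (1 + c) * P) (hc : 0 ≤ c) :
    |w / Q - w / P| ≤ t ^ 2 * c / m := by
  have hP0 : 0 < P := lt_of_lt_of_le (by positivity) hP
  have hQ0 : 0 < Q := lt_of_lt_of_le hP0 hPQ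
  have h1 : w / Q ≤ w / P := div_le_div_of_nonneg_left hw hP0 hPQ
  rw [abs_sub_comm, abs_of_nonneg (by linarith)]
  have h2 : w / P - w / Q = w * (Q - P) / (P * Q) := by field_simp
  rw [h2, div_le_div_iff₀ (by positivity) hm]
  have h3 : m ≤ P * t := (div_le_iff₀ ht).1 hP
  calc w * (Q - P) * m ≤ t * (c * P) * (P * t) := by
        apply mul_le_mul (mul_le_mul hwt (by linarith) (by linarith) ht.le) h3 hm.le
        positivity
    _ = t ^ 2 * c * (P * P) := by ring
    _ ≤ t ^ 2 * c * (P * Q) := by gcongr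

lemma aux_sqrt (bi bj di dj c : ℝ) (hbj : 0 ≤ bj) (hc : 0 ≤ c)
    (hi : di ≤ (1 + c) * bi) (hj : dj ≤ (1 + c) * bj) :
    √di * √dj ≤ (1 + c) * (√bi * √bj) := by
  have h1 : √di ≤ √(1 + c) * √bi := by
    rw [← Real.sqrt_mul (by linarith)]; exact Real.sqrt_le_sqrt hi
  have h2 : √dj ≤ √(1 + c) * √bj := by
    rw [← Real.sqrt_mul (by linarith)]; exact Real.sqrt_le_sqrt hj
  calc √di * √dj ≤ (√(1 + c) * √bi) * (√(1 + c) * √bj) := by gcongr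
    _ = (√(1 + c) * √(1 + c)) * (√bi * √bj) := by ring
    _ = _ := by rw [Real.mul_self_sqrt (by linarith)]

lemma aux_le_sqrt (x a b : ℝ) (hx : 0 ≤ x) (ha : x ≤ a) (hb : x ≤ b) : x ≤ √a * √b := by
  have := mul_le_mul (Real.sqrt_le_sqrt ha) (Real.sqrt_le_sqrt hb) (Real.sqrt_nonneg _)
    (Real.sqrt_nonneg _)
  rwa [Real.mul_self_sqrt hx] at this

/-- paper's Lemma A.9.  There is an absolute constant `C > 0` such
that: for any `K̄ ≥ 1` dividing `n`, `δ, ξ ∈ [0,1)`, and any symmetric `W ∈ ℝ^{n×n}`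
partitioned into blocks by a group assignment `g : Fin n → Fin K̄` with all groups of
size `n/K̄`, with all in-block entries in `[1/(1+δ), 1+δ]` and all off-block entries
nonnegative and at most `ξ` times every in-block entry, the normalized matrix `Ã` of `W`
and the normalized matrix `Ā` of the block-diagonal part of `W` satisfy
`‖Ã − Ā‖_F ≤ C K̄^{5/2} (1+δ)² ξ`. -/
theorem normalized_offdiag_perturbation :
    ∃ C : ℝ, 0 < C ∧
      ∀ (n Kb : ℕ), 1 ≤ Kb → Kb ∣ n →
      ∀ (δ ξ : ℝ), 0 ≤ δ → δ < 1 → 0 ≤ ξ → ξ < 1 →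
      ∀ (g : Fin n → Fin Kb),
        (∀ k : Fin Kb, (Finset.univ.filter fun i => g i = k).card = n / Kb) →
      ∀ (W : Matrix (Fin n) (Fin n) ℝ), W.IsSymm →
        (∀ i j, g i = g j → 1 / (1 + δ) ≤ W i j ∧ W i j ≤ 1 + δ) →
        (∀ i j, g i ≠ g j → 0 ≤ W i j ∧ ∀ s t, g s = g t → W i j ≤ ξ * W s t) →
        Real.sqrt (frobSq (normalizedMatrix W -
            normalizedMatrix (Matrix.of fun i j => if g i = g j then W i j else 0))) ≤
          C * (Kb : ℝ) ^ ((5 : ℝ) / 2) * (1 + δ) ^ 2 * ξ := by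
  refine ⟨1, one_pos, ?_⟩
  intro n Kb hK hdvd δ ξ hδ0 _ hξ0 _ g hg W hsymm hin hoff
  obtain ⟨m, rfl⟩ := hdvd
  have hK0 : 0 < Kb := hK
  simp only [Nat.mul_div_cancel_left m hK0] at hg
  have hK1 : (1 : ℝ) ≤ Kb := by exact_mod_cast hK
  set V : Matrix (Fin (Kb * m)) (Fin (Kb * m)) ℝ :=
    Matrix.of fun i j => if g i = g j then W i j else 0 with hV
  have hVe : ∀ i j, V i j = if g i = g j then W i j else 0 := fun i j => rfl
  have ht : 0 < 1 + δ := by linarith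
  have hWpos : ∀ i j, 0 ≤ W i j := by
    intro i j
    by_cases h : g i = g j
    · exact le_trans (by positivity) (hin i j h).1
    · exact (hoff i j h).1
  have hcard : ∀ i, ((univ.filter fun k => g i = g k).card : ℝ) = m := by
    intro i
    have := hg (g i)
    simp only [eq_comm (b := g i)] at this
    exact_mod_cast this
  have hVsum : ∀ i, ∑ k, V i k = ∑ k ∈ univ.filter (fun k => g i = g k), W i k := by
    intro i
    simp only [hVe, Finset.sum_filter]
  -- lower bounds on block row sums
  have hblow : ∀ i x, (∀ k, g i = g k → x ≤ W i k) → m * x ≤ ∑ k, V i k := by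
    intro i x hx
    rw [hVsum, ← hcard i, ← nsmul_eq_mul]
    apply Finset.card_nsmul_le_sum
    intro k hk
    exact hx k (by simpa using hk)
  have hb0 : ∀ i, 0 ≤ ∑ k, V i k := by
    intro i
    rw [hVsum]
    exact Finset.sum_nonneg fun k _ => hWpos i k
  have hoffb : ∀ i j l, g i ≠ g j → m * W i j ≤ ξ * ∑ k, V l k := by
    intro i j l h
    rw [hVsum, Finset.mul_sum, ← hcard l, ← nsmul_eq_mul]
    apply Finset.card_nsmul_le_sum
    intro k hk
    exact (hoff i j h).2 l k (by simpa using hk)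
  have hVW : ∀ i, ∑ k, V i k ≤ ∑ k, W i k := by
    intro i
    apply Finset.sum_le_sum
    intro k _
    rw [hVe]
    split_ifs
    · exact le_rfl
    · exact hWpos i k
  have key : ∀ i j, |(normalizedMatrix W - normalizedMatrix V) i j| ≤
      (1 + δ) ^ 2 * (Kb * ξ) / m := by
    intro i j
    have hm : 0 < (m : ℝ) := by
      have : 0 < m := by
        rcases Nat.eq_zero_or_pos m with h | h
        · subst h; exact absurd i.2 (by simp)
        · exact h
      exact_mod_cast this
    have hup : ∀ i, ∑ k, W i k ≤ (1 + Kb * ξ) * ∑ k, V i k := by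
      intro i
      have h1 : ∀ k ∈ (univ : Finset (Fin (Kb * m))),
          W i k ≤ V i k + ξ * (∑ k, V i k) / m := by
        intro k _
        rw [hVe i k]
        split_ifs with h
        · have := hb0 i
          have : 0 ≤ ξ * (∑ k, V i k) / m := by positivity
          linarith
        · rw [zero_add, le_div_iff₀ hm, mul_comm]
          exact hoffb i k i h
      refine (Finset.sum_le_sum h1).trans (le_of_eq ?_)
      rw [Finset.sum_add_distrib, Finset.sum_const, Finset.card_univ, Fintype.card_fin,
        nsmul_eq_mul]
      push_cast
      field_simp
    have hlow : ∀ i, m / (1 + δ) ≤ ∑ k, V i k := by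
      intro i
      have := hblow i (1 / (1 + δ)) fun k hk => (hin i k hk).1
      rwa [mul_one_div] at this
    have hP : m / (1 + δ) ≤ √(∑ k, V i k) * √(∑ k, V j k) :=
      aux_le_sqrt _ _ _ (by positivity) (hlow i) (hlow j)
    have hPQ : √(∑ k, V i k) * √(∑ k, V j k) ≤ √(∑ k, W i k) * √(∑ k, W j k) :=
      mul_le_mul (Real.sqrt_le_sqrt (hVW i)) (Real.sqrt_le_sqrt (hVW j))
        (Real.sqrt_nonneg _) (Real.sqrt_nonneg _)
    have hQ := aux_sqrt _ _ _ _ (Kb * ξ) (hb0 j) (by positivity) (hup i) (hup j)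
    have e : (normalizedMatrix W - normalizedMatrix V) i j =
        W i j / (√(∑ k, W i k) * √(∑ k, W j k)) -
        V i j / (√(∑ k, V i k) * √(∑ k, V j k)) := rfl
    rw [e]
    by_cases h : g i = g j
    · rw [hVe i j, if_pos h]
      exact aux_in _ _ _ _ _ _ (hWpos i j) (hin i j h).2 ht hm hP hPQ hQ (by positivity)
    · rw [hVe i j, if_neg h, zero_div, sub_zero]
      have hP0 : 0 < √(∑ k, V i k) * √(∑ k, V j k) := lt_of_lt_of_le (by positivity) hP
      have hQ0 := lt_of_lt_of_le hP0 hPQ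
      rw [abs_of_nonneg (div_nonneg (hWpos i j) hQ0.le), div_le_div_iff₀ hQ0 hm]
      have h1 := aux_le_sqrt (m * W i j) _ _ (mul_nonneg hm.le (hWpos i j))
        (hoffb i j i h) (hoffb i j j h)
      rw [Real.sqrt_mul hξ0, Real.sqrt_mul hξ0] at h1
      have h2 : m * W i j ≤ ξ * (√(∑ k, V i k) * √(∑ k, V j k)) := by
        calc _ ≤ _ := h1
          _ = (√ξ * √ξ) * (√(∑ k, V i k) * √(∑ k, V j k)) := by ring
          _ = _ := by rw [Real.mul_self_sqrt hξ0]
      have h3 : ξ ≤ (1 + δ) ^ 2 * (Kb * ξ) := by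
        have : 1 ≤ (1 + δ) ^ 2 := by nlinarith
        have h4 : ξ ≤ Kb * ξ := by nlinarith
        nlinarith
      calc W i j * m = m * W i j := mul_comm _ _
        _ ≤ _ := h2
        _ ≤ _ := mul_le_mul h3 hPQ hP0.le (by positivity)
  have hB : 0 ≤ (1 + δ) ^ 2 * (Kb * ξ) / m := by positivity
  have hfrob : frobSq (normalizedMatrix W - normalizedMatrix V) ≤
      ((Kb * m : ℝ) * ((1 + δ) ^ 2 * (Kb * ξ) / m)) ^ 2 := by
    unfold frobSq
    calc _ ≤ ∑ i : Fin (Kb * m), ∑ j : Fin (Kb * m), ((1 + δ) ^ 2 * (Kb * ξ) / m) ^ 2 := by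
          apply Finset.sum_le_sum; intro i _
          apply Finset.sum_le_sum; intro j _
          exact sq_le_sq.2 ((key i j).trans (le_abs_self _))
      _ = _ := by
          simp only [Finset.sum_const, Finset.card_univ, Fintype.card_fin, nsmul_eq_mul]
          push_cast
          ring
  have h1 := Real.sqrt_le_sqrt hfrob
  rw [Real.sqrt_sq (by positivity)] at h1
  refine h1.trans ?_
  have h2 : (Kb * m : ℝ) * ((1 + δ) ^ 2 * (Kb * ξ) / m) ≤ (Kb : ℝ) ^ 2 * (1 + δ) ^ 2 * ξ := by
    rcases Nat.eq_zero_or_pos m with h | h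
    · subst h; simp; positivity
    · have : (0 : ℝ) < m := by exact_mod_cast h
      apply le_of_eq
      field_simp
  have h3 : (Kb : ℝ) ^ 2 ≤ (Kb : ℝ) ^ ((5 : ℝ) / 2) := by
    rw [← Real.rpow_natCast]
    exact Real.rpow_le_rpow_of_exponent_le hK1 (by norm_num)
  refine h2.trans ?_
  rw [one_mul]
  gcongr
end

section
/- There is an absolute constant C > 0 with the following property. Let K̄ ≥ 1 divide n, let δ, ξ ∈ [0,1), let p satisfy K̄ ≤ p ≤ n, and let W ∈ ℝ^{n×n} be a symmetric matrix partitioned into K̄ × K̄ blocks according to K̄ groups of indices each of size n/K̄, such that every entry of W inside a diagonal block lies in [1/(1+δ), 1+δ], within each diagonal block all same-column entry ratios are at most 1+δ, and every entry outside the diagonal blocks is nonnegative and at most ξ times every entry inside the diagonal blocks. Let Ã be the normalized matrix of W, with eigenvalues λ̃₁ ≥ λ̃₂ ≥ … ≥ λ̃ₙ in decreasing order. Then: (i) 1 − C K̄^{5/2} ξ ≤ λ̃ᵢ ≤ 1 for every i ∈ {1,…,K̄}; and (ii) Σ_{i=K̄+1}^{p} λ̃ᵢ ≤ C ( sqrt(p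 K̄ δ) + p K̄^{5/2} ξ ). -/
open Matrix Finset

lemma aux_quad_le {n : ℕ} (M : Matrix (Fin n) (Fin n) ℝ) (hs : ∀ i j, M i j = M j i)
    (h0 : ∀ i j, 0 ≤ M i j) (x : Fin n → ℝ) :
    ∑ i, ∑ j, M i j * (x i * x j) ≤ ∑ i, (∑ j, M i j) * x i ^ 2 := by
  have h1 : ∑ i, ∑ j, M i j * x j ^ 2 = ∑ i, (∑ j, M i j) * x i ^ 2 := by
    rw [Finset.sum_comm]
    refine Finset.sum_congr rfl fun i _ => ?_
    rw [Finset.sum_mul]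
    exact Finset.sum_congr rfl fun j _ => by rw [hs]
  have h2 : ∑ i, ∑ j, M i j * x i ^ 2 = ∑ i, (∑ j, M i j) * x i ^ 2 :=
    Finset.sum_congr rfl fun i _ => by rw [Finset.sum_mul]
  have h3 : ∑ i, ∑ j, M i j * (x i * x j) ≤
      ∑ i, ∑ j, (1/2 * (M i j * x i ^ 2) + 1/2 * (M i j * x j ^ 2)) := by
    refine Finset.sum_le_sum fun i _ => Finset.sum_le_sum fun j _ => ?_
    nlinarith [mul_nonneg (h0 i j) (sq_nonneg (x i - x j))]
  simp only [Finset.sum_add_distrib, ← Finset.mul_sum, h1, h2] at h3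
  linarith

lemma aux_quad_ge {n : ℕ} (M : Matrix (Fin n) (Fin n) ℝ) (hs : ∀ i j, M i j = M j i)
    (h0 : ∀ i j, 0 ≤ M i j) (x : Fin n → ℝ) :
    - ∑ i, (∑ j, M i j) * x i ^ 2 ≤ ∑ i, ∑ j, M i j * (x i * x j) := by
  have h1 : ∑ i, ∑ j, M i j * x j ^ 2 = ∑ i, (∑ j, M i j) * x i ^ 2 := by
    rw [Finset.sum_comm]
    refine Finset.sum_congr rfl fun i _ => ?_
    rw [Finset.sum_mul]
    exact Finset.sum_congr rfl fun j _ => by rw [hs]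
  have h2 : ∑ i, ∑ j, M i j * x i ^ 2 = ∑ i, (∑ j, M i j) * x i ^ 2 :=
    Finset.sum_congr rfl fun i _ => by rw [Finset.sum_mul]
  have h3 : ∑ i, ∑ j, -(1/2 * (M i j * x i ^ 2) + 1/2 * (M i j * x j ^ 2)) ≤
      ∑ i, ∑ j, M i j * (x i * x j) := by
    refine Finset.sum_le_sum fun i _ => Finset.sum_le_sum fun j _ => ?_
    nlinarith [mul_nonneg (h0 i j) (sq_nonneg (x i + x j))]
  simp only [Finset.sum_neg_distrib, Finset.sum_add_distrib, ← Finset.mul_sum, h1, h2] at h3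
  linarith

lemma aux_trace {n : ℕ} (M U : Matrix (Fin n) (Fin n) ℝ) (hU : U * Uᵀ = 1) :
    ∑ l, ∑ i, ∑ j, M i j * (U i l * U j l) = ∑ i, M i i := by
  have h : ∀ i j, ∑ l, U i l * U j l = if i = j then 1 else 0 := by
    intro i j
    have := congrFun (congrFun hU i) j
    simpa [Matrix.mul_apply, Matrix.one_apply] using this
  rw [Finset.sum_comm]
  refine Finset.sum_congr rfl fun i _ => ?_
  rw [Finset.sum_comm]
  simp [← Finset.mul_sum, h]

lemma aux_orth {n : ℕ} (U : Matrix (Fin n) (Fin n) ℝ) (hU : U * Uᵀ = 1) (l l' : Fin n) :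
    ∑ i, U i l * U i l' = if l = l' then 1 else 0 := by
  have hU' : Uᵀ * U = 1 := mul_eq_one_comm.mp hU
  have := congrFun (congrFun hU' l) l'
  simpa [Matrix.mul_apply, Matrix.one_apply] using this

/-- quadratic form of the spectral decomposition -/
lemma aux_spec {n : ℕ} (U : Matrix (Fin n) (Fin n) ℝ) (μ : Fin n → ℝ) (x : Fin n → ℝ) :
    ∑ i, ∑ j, (U * Matrix.diagonal μ * Uᵀ) i j * (x i * x j)
      = ∑ l, μ l * (∑ i, U i l * x i) ^ 2 := by
  have h : ∀ i j, (U * Matrix.diagonal μ * Uᵀ) i j = ∑ l, U i l * μ l * U j l := by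
    intro i j
    rw [Matrix.mul_apply]
    simp [Matrix.mul_diagonal]
  simp only [h, Finset.sum_mul]
  have : ∀ i, ∑ j, ∑ l, U i l * μ l * U j l * (x i * x j)
      = ∑ l, ∑ j, U i l * μ l * U j l * (x i * x j) := fun i => Finset.sum_comm
  simp only [this]
  rw [Finset.sum_comm]
  refine Finset.sum_congr rfl fun l _ => ?_
  rw [pow_two, Finset.sum_mul_sum, Finset.mul_sum]
  refine Finset.sum_congr rfl fun i _ => ?_
  rw [Finset.mul_sum]
  exact Finset.sum_congr rfl fun j _ => by ring

lemma aux_norm {n : ℕ} (U : Matrix (Fin n) (Fin n) ℝ) (hU : U * Uᵀ = 1) (x : Fin n → ℝ) :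
    ∑ l, (∑ i, U i l * x i) ^ 2 = ∑ i, x i ^ 2 := by
  have h := aux_spec U (fun _ => 1) x
  have h1 : U * Matrix.diagonal (fun _ => (1:ℝ)) * Uᵀ = 1 := by
    rw [Matrix.diagonal_one, Matrix.mul_one, hU]
  rw [h1] at h
  simp [Matrix.one_apply] at h
  rw [← h]
  exact Finset.sum_congr rfl fun i _ => by ring

lemma aux_eig {n : ℕ} (U : Matrix (Fin n) (Fin n) ℝ) (hU : U * Uᵀ = 1) (μ : Fin n → ℝ)
    (l : Fin n) :
    ∑ i, ∑ j, (U * Matrix.diagonal μ * Uᵀ) i j * (U i l * U j l) = μ l := by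
  rw [aux_spec U μ (fun i => U i l)]
  simp [aux_orth U hU]

/-- min-max -/
lemma aux_minmax {n K : ℕ} (U : Matrix (Fin n) (Fin n) ℝ) (hU : U * Uᵀ = 1) (μ : Fin n → ℝ)
    (hμ : Antitone μ) (i0 : Fin n) (hi : (i0 : ℕ) < K) (g : Fin n → Fin K) (r : Fin n → ℝ) :
    ∃ c : Fin K → ℝ, c ≠ 0 ∧
      ∑ i, ∑ j, (U * Matrix.diagonal μ * Uᵀ) i j * ((r i * c (g i)) * (r j * c (g j)))
        ≤ μ i0 * ∑ i, (r i * c (g i)) ^ 2 := by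
  let f : (Fin K → ℝ) →ₗ[ℝ] (Fin i0 → ℝ) :=
    { toFun := fun c l => ∑ i, U i ⟨l, l.2.trans i0.2⟩ * (r i * c (g i))
      map_add' := by
        intro c c'
        ext l
        simp [mul_add, Finset.sum_add_distrib]
      map_smul' := by
        intro t c
        ext l
        simp only [Pi.smul_apply, smul_eq_mul, RingHom.id_apply, Finset.mul_sum]
        exact Finset.sum_congr rfl fun i _ => by ring }
  have hk : LinearMap.ker f ≠ ⊥ := by
    apply LinearMap.ker_ne_bot_of_finrank_lt
    simpa using hi
  obtain ⟨c, hc, hc0⟩ := Submodule.exists_mem_ne_zero_of_ne_bot hk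
  refine ⟨c, hc0, ?_⟩
  rw [aux_spec U μ (fun i => r i * c (g i)), ← aux_norm U hU (fun i => r i * c (g i)),
    Finset.mul_sum]
  refine Finset.sum_le_sum fun l _ => ?_
  by_cases hl : l < i0
  · have : ∑ i, U i l * (r i * c (g i)) = 0 := by
      have := congrFun (LinearMap.mem_ker.mp hc) ⟨l, hl⟩
      simpa [f] using this
    rw [this]; simp
  · exact mul_le_mul_of_nonneg_right (hμ (not_lt.mp hl)) (sq_nonneg _)

lemma aux_frob {n : ℕ} (U : Matrix (Fin n) (Fin n) ℝ) (hU : U * Uᵀ = 1) (S : Finset (Fin n))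
    (Q : Matrix (Fin n) (Fin n) ℝ) (B : ℝ) (hQ : ∑ i, ∑ j, Q i j ^ 2 ≤ B) :
    ∑ l ∈ S, ∑ i, ∑ j, Q i j * (U i l * U j l) ≤ Real.sqrt (S.card * B) := by
  have hP : ∑ i, ∑ j, (∑ l ∈ S, U i l * U j l) ^ 2 = S.card := by
    have e : ∀ i j, (∑ l ∈ S, U i l * U j l) ^ 2
        = ∑ l ∈ S, ∑ l' ∈ S, (U i l * U i l') * (U j l * U j l') := by
      intro i j
      rw [pow_two, Finset.sum_mul_sum]
      exact Finset.sum_congr rfl fun l _ => Finset.sum_congr rfl fun l' _ => by ring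
    calc ∑ i, ∑ j, (∑ l ∈ S, U i l * U j l) ^ 2
        = ∑ l ∈ S, ∑ l' ∈ S, ∑ i, ∑ j, (U i l * U i l') * (U j l * U j l') := by
          simp only [e]
          have e1 : ∀ i, ∑ j, ∑ l ∈ S, ∑ l' ∈ S, (U i l * U i l') * (U j l * U j l')
              = ∑ l ∈ S, ∑ l' ∈ S, ∑ j, (U i l * U i l') * (U j l * U j l') := by
            intro i
            rw [Finset.sum_comm]
            exact Finset.sum_congr rfl fun l _ => Finset.sum_comm
          simp only [e1]
          rw [Finset.sum_comm]
          exact Finset.sum_congr rfl fun l _ => Finset.sum_comm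
      _ = ∑ l ∈ S, ∑ l' ∈ S, (if l = l' then (1:ℝ) else 0) := by
          refine Finset.sum_congr rfl fun l _ => Finset.sum_congr rfl fun l' _ => ?_
          rw [← Finset.sum_mul_sum, aux_orth U hU]
          split_ifs <;> simp
      _ = S.card := by simp
  have hE : ∑ l ∈ S, ∑ i, ∑ j, Q i j * (U i l * U j l)
      = ∑ i, ∑ j, Q i j * (∑ l ∈ S, U i l * U j l) := by
    rw [Finset.sum_comm]
    refine Finset.sum_congr rfl fun i _ => ?_
    rw [Finset.sum_comm]
    exact Finset.sum_congr rfl fun j _ => by rw [Finset.mul_sum]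
  rw [hE]
  apply Real.le_sqrt_of_sq_le
  have cs := Finset.sum_mul_sq_le_sq_mul_sq (Finset.univ : Finset (Fin n × Fin n))
    (fun q => Q q.1 q.2) (fun q => ∑ l ∈ S, U q.1 l * U q.2 l)
  simp only [Fintype.sum_prod_type] at cs
  rw [hP] at cs
  refine cs.trans ?_
  rw [mul_comm]
  exact mul_le_mul_of_nonneg_left hQ (Nat.cast_nonneg _)

/-- sum over blocks of relative masses -/
lemma aux_blocks {n K : ℕ} (g : Fin n → Fin K) (a : Fin n → ℝ)
    (hV : ∀ k, 0 < ∑ i, if g i = k then a i else 0) :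
    ∑ i, a i / (∑ j, if g j = g i then a j else 0) = K := by
  have : ∀ i, a i / (∑ j, if g j = g i then a j else 0)
      = ∑ k, (if g i = k then a i else 0) / (∑ j, if g j = k then a j else 0) := by
    intro i
    rw [Finset.sum_eq_single (g i)]
    · simp
    · intro k _ hk
      simp [Ne.symm hk]
    · simp
  simp only [this]
  rw [Finset.sum_comm]
  simp only [← Finset.sum_div]
  rw [Finset.sum_congr rfl (fun k _ => div_self (hV k).ne')]
  simp

lemma aux_T {n K : ℕ} (U : Matrix (Fin n) (Fin n) ℝ) (hU : U * Uᵀ = 1) (S : Finset (Fin n))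
    (g : Fin n → Fin K) (w : Fin n → ℝ) (V : Fin K → ℝ) (hV : ∀ k, 0 < V k) :
    ∑ l ∈ S, ∑ i, ∑ j, (if g i = g j then w i * w j / V (g i) else 0) * (U i l * U j l)
      ≤ ∑ i, w i ^ 2 / V (g i) := by
  have hpos : ∀ l, 0 ≤ ∑ i, ∑ j,
      (if g i = g j then w i * w j / V (g i) else 0) * (U i l * U j l) := by
    intro l
    have : ∑ i, ∑ j, (if g i = g j then w i * w j / V (g i) else 0) * (U i l * U j l)
        = ∑ k, (∑ i, if g i = k then w i * U i l else 0) ^ 2 / V k := by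
      have e : ∀ k, (∑ i, if g i = k then w i * U i l else 0) ^ 2 / V k
          = ∑ i, ∑ j, (if g i = k then w i * U i l else 0) *
              (if g j = k then w j * U j l else 0) / V k := by
        intro k
        rw [pow_two, Finset.sum_mul_sum, Finset.sum_div]
        exact Finset.sum_congr rfl fun i _ => by rw [Finset.sum_div]
      simp only [e]
      rw [Finset.sum_comm (s := (Finset.univ : Finset (Fin K)))]
      refine Finset.sum_congr rfl fun i _ => ?_
      rw [Finset.sum_comm (s := (Finset.univ : Finset (Fin K)))]
      refine Finset.sum_congr rfl fun j _ => ?_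
      rw [Finset.sum_eq_single (g i)]
      · by_cases h : g i = g j
        · simp [h]; ring
        · simp [h, Ne.symm h]
      · intro k _ hk
        simp [Ne.symm hk]
      · simp
    rw [this]
    exact Finset.sum_nonneg fun k _ => div_nonneg (sq_nonneg _) (hV k).le
  calc _ ≤ ∑ l, ∑ i, ∑ j,
      (if g i = g j then w i * w j / V (g i) else 0) * (U i l * U j l) :=
        Finset.sum_le_sum_of_subset_of_nonneg (Finset.subset_univ S) fun l _ _ => hpos l
    _ = _ := by
      rw [aux_trace (fun i j => if g i = g j then w i * w j / V (g i) else 0) U hU]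
      exact Finset.sum_congr rfl fun i _ => by simp [pow_two]

lemma aux_core {n K p : ℕ} (hKp : K ≤ p) (hpn : p ≤ n) (δ ξ : ℝ) (hξ : 0 ≤ ξ)
    (g : Fin n → Fin K) (hg : ∀ k, ∃ i, g i = k)
    (W W0 W1 : Matrix (Fin n) (Fin n) ℝ) (a b : Fin n → ℝ)
    (hW : ∀ i j, W i j = W0 i j + W1 i j)
    (s0 : ∀ i j, W0 i j = W0 j i) (s1 : ∀ i j, W1 i j = W1 j i)
    (p0 : ∀ i j, 0 ≤ W0 i j) (p1 : ∀ i j, 0 ≤ W1 i j)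
    (hz : ∀ i j, g i ≠ g j → W0 i j = 0)
    (ha : ∀ i, ∑ j, W0 i j = a i) (hb : ∀ i, ∑ j, W1 i j = b i) (hapos : ∀ i, 0 < a i)
    (hba : ∀ i, b i ≤ K * ξ * a i)
    (hF : ∑ i, ∑ j, W0 i j ^ 2 / (a i * a j) ≤ K * (1 + δ))
    (μ : Fin n → ℝ) (hμ : Antitone μ) (U : Matrix (Fin n) (Fin n) ℝ) (hU : U * Uᵀ = 1)
    (hA : normalizedMatrix W = U * Matrix.diagonal μ * Uᵀ) :
    (∀ i : Fin n, (i : ℕ) < K → 1 - 2 * (K * ξ) ≤ μ i ∧ μ i ≤ 1) ∧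
      ∑ i ∈ Finset.univ.filter (fun i : Fin n => K ≤ (i : ℕ) ∧ (i : ℕ) < p), μ i ≤
        Real.sqrt (p * (K * δ)) + 3 * (p * (K * ξ)) := by
  have hKξ : 0 ≤ (K : ℝ) * ξ := by positivity
  have hbpos : ∀ i, 0 ≤ b i := fun i => by
    rw [← hb]; exact Finset.sum_nonneg fun j _ => p1 i j
  obtain ⟨r, hr⟩ : ∃ r : Fin n → ℝ, r = fun i => Real.sqrt (a i + b i) := ⟨_, rfl⟩
  have hdpos : ∀ i, 0 < a i + b i := fun i => by linarith [hapos i, hbpos i]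
  have hrpos : ∀ i, 0 < r i := fun i => by rw [hr]; exact Real.sqrt_pos.mpr (hdpos i)
  have hr2 : ∀ i, r i ^ 2 = a i + b i := fun i => by
    rw [hr]; exact Real.sq_sqrt (hdpos i).le
  have hWd : ∀ i, ∑ j, W i j = a i + b i := fun i => by
    simp only [hW, Finset.sum_add_distrib, ha, hb]
  have hA' : ∀ i j, (U * Matrix.diagonal μ * Uᵀ) i j = W i j / (r i * r j) := by
    intro i j
    rw [← hA]
    simp only [normalizedMatrix, hWd, hr]
  have hbd : ∀ i, b i ≤ K * ξ * (a i + b i) := fun i => by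
    nlinarith [hba i, mul_nonneg hKξ (hbpos i)]
  have hlow : ∀ i : Fin n, (i : ℕ) < K → 1 - 2 * (K * ξ) ≤ μ i := by
    intro i0 hi0
    obtain ⟨c, hc0, hc⟩ := aux_minmax U hU μ hμ i0 hi0 g r
    have e1 : ∑ i, ∑ j, (U * Matrix.diagonal μ * Uᵀ) i j * ((r i * c (g i)) * (r j * c (g j)))
        = ∑ i, ∑ j, W0 i j * (c (g i) * c (g j)) + ∑ i, ∑ j, W1 i j * (c (g i) * c (g j)) := by
      simp only [← Finset.sum_add_distrib]
      refine Finset.sum_congr rfl fun i _ => Finset.sum_congr rfl fun j _ => ?_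
      rw [hA', hW]
      have := (hrpos i).ne'
      have := (hrpos j).ne'
      field_simp
    have e2 : ∑ i, ∑ j, W0 i j * (c (g i) * c (g j)) = ∑ i, a i * c (g i) ^ 2 := by
      refine Finset.sum_congr rfl fun i _ => ?_
      rw [← ha, Finset.sum_mul]
      refine Finset.sum_congr rfl fun j _ => ?_
      by_cases h : g i = g j
      · rw [h]; ring
      · rw [hz i j h]; ring
    have e3 := aux_quad_ge W1 s1 p1 (fun i => c (g i))
    simp only [hb] at e3
    have e4 : ∑ i, (r i * c (g i)) ^ 2 = ∑ i, (a i + b i) * c (g i) ^ 2 :=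
      Finset.sum_congr rfl fun i _ => by rw [mul_pow, hr2]
    rw [e1, e2, e4] at hc
    have e5 : ∑ i, (a i + b i) * c (g i) ^ 2
        = ∑ i, a i * c (g i) ^ 2 + ∑ i, b i * c (g i) ^ 2 := by
      simp only [add_mul, Finset.sum_add_distrib]
    have e6 : ∑ i, b i * c (g i) ^ 2 ≤ K * ξ * ∑ i, (a i + b i) * c (g i) ^ 2 := by
      rw [Finset.mul_sum]
      refine Finset.sum_le_sum fun i _ => ?_
      rw [← mul_assoc]
      exact mul_le_mul_of_nonneg_right (hbd i) (sq_nonneg _)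
    have e7 : 0 < ∑ i, (a i + b i) * c (g i) ^ 2 := by
      obtain ⟨k, hk⟩ := Function.ne_iff.mp hc0
      obtain ⟨i, hi⟩ := hg k
      refine Finset.sum_pos' (fun i _ => mul_nonneg (hdpos i).le (sq_nonneg _))
        ⟨i, Finset.mem_univ _, mul_pos (hdpos i) ?_⟩
      rw [hi]
      exact sq_pos_of_ne_zero hk
    refine le_of_mul_le_mul_right ?_ e7
    linarith
  have hUn : ∀ l, ∑ i, (a i + b i) * (U i l / r i) ^ 2 = 1 := by
    intro l
    have := aux_orth U hU l l
    rw [if_pos rfl] at this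
    rw [← this]
    refine Finset.sum_congr rfl fun i _ => ?_
    rw [← hr2]
    have := (hrpos i).ne'
    field_simp
  refine ⟨fun i hi => ⟨hlow i hi, ?_⟩, ?_⟩
  · rw [← aux_eig U hU μ i]
    have h := aux_quad_le W (fun i j => by rw [hW, hW, s0, s1])
      (fun i j => by rw [hW]; exact add_nonneg (p0 i j) (p1 i j)) (fun j => U j i / r j)
    simp only [hWd, hUn] at h
    refine le_trans (le_of_eq ?_) h
    refine Finset.sum_congr rfl fun i _ => Finset.sum_congr rfl fun j _ => ?_
    rw [hA']
    ring
  · obtain ⟨V, hVd⟩ : ∃ V : Fin K → ℝ, V = fun k => ∑ i, if g i = k then a i else 0 := ⟨_, rfl⟩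
    have hV : ∀ k, 0 < V k := by
      intro k
      obtain ⟨i, hi⟩ := hg k
      rw [hVd]
      refine Finset.sum_pos' (fun i _ => ?_) ⟨i, Finset.mem_univ _, ?_⟩
      · split_ifs
        exacts [(hapos i).le, le_rfl]
      · rw [if_pos hi]; exact hapos i
    have hVK : ∑ i, a i / V (g i) = K := by
      have := aux_blocks g a (fun k => by have := hV k; rwa [hVd] at this)
      rw [hVd]; exact this
    let T : Matrix (Fin n) (Fin n) ℝ := fun i j =>
      if g i = g j then (a i / r i) * (a j / r j) / V (g i) else 0
    let Q : Matrix (Fin n) (Fin n) ℝ := fun i j => W0 i j / (r i * r j) - T i j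
    have hQ : ∑ i, ∑ j, Q i j ^ 2 ≤ K * δ := by
      have q1 : ∀ i j, Q i j ^ 2 ≤ W0 i j ^ 2 / (a i * a j) - 2 * (W0 i j / V (g i))
          + a i / V (g i) ^ 2 * (if g j = g i then a j else 0) := by
        intro i j
        have hi := hapos i
        have hj := hapos j
        have hri := (hrpos i)
        have hrj := (hrpos j)
        have hv := hV (g i)
        by_cases h : g i = g j
        · have : Q i j = (W0 i j - a i * a j / V (g i)) / (r i * r j) := by
            simp only [Q, T, if_pos h]
            field_simp
          rw [this, div_pow, if_pos h.symm]
          have h1 : W0 i j ^ 2 / (a i * a j) - 2 * (W0 i j / V (g i)) + a i / V (g i) ^ 2 * a j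
              = (W0 i j - a i * a j / V (g i)) ^ 2 / (a i * a j) := by
            field_simp
            ring
          rw [h1]
          refine div_le_div_of_nonneg_left (sq_nonneg _) (mul_pos hi hj) ?_
          rw [mul_pow, hr2, hr2]
          exact mul_le_mul (by linarith [hbpos i]) (by linarith [hbpos j]) hj.le (hdpos i).le
        · simp [Q, T, h, hz i j h, Ne.symm h]
      calc ∑ i, ∑ j, Q i j ^ 2 ≤ ∑ i, ∑ j, (W0 i j ^ 2 / (a i * a j) - 2 * (W0 i j / V (g i))
          + a i / V (g i) ^ 2 * (if g j = g i then a j else 0)) :=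
            Finset.sum_le_sum fun i _ => Finset.sum_le_sum fun j _ => q1 i j
        _ = ∑ i, ∑ j, W0 i j ^ 2 / (a i * a j) - 2 * ∑ i, a i / V (g i)
            + ∑ i, a i / V (g i) := by
          simp only [Finset.sum_add_distrib, Finset.sum_sub_distrib, ← Finset.mul_sum,
            ← Finset.sum_div, ha]
          congr 1
          refine Finset.sum_congr rfl fun i _ => ?_
          have hv := hV (g i)
          have : (∑ j, if g j = g i then a j else 0) = V (g i) := by rw [hVd]
          rw [this]
          field_simp
        _ ≤ K * δ := by rw [hVK]; linarith
    have tot : ∀ S : Finset (Fin n), ∑ l ∈ S, μ l ≤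
        Real.sqrt (S.card * (K * δ)) + K + S.card * (K * ξ) := by
      intro S
      have f1 := aux_frob U hU S Q _ hQ
      have f2 := aux_T U hU S g (fun i => a i / r i) V hV
      have f2' : ∑ i, (a i / r i) ^ 2 / V (g i) ≤ K := by
        rw [← hVK]
        refine Finset.sum_le_sum fun i _ => ?_
        refine div_le_div_of_nonneg_right ?_ (hV _).le
        rw [div_pow, hr2, div_le_iff₀ (hdpos i)]
        nlinarith [hapos i, hbpos i, mul_nonneg (hapos i).le (hbpos i)]
      have f3 : ∀ l, ∑ i, ∑ j, W1 i j * ((U i l / r i) * (U j l / r j)) ≤ K * ξ := by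
        intro l
        refine (aux_quad_le W1 s1 p1 (fun i => U i l / r i)).trans ?_
        rw [← mul_one ((K:ℝ) * ξ), ← hUn l, Finset.mul_sum]
        refine Finset.sum_le_sum fun i _ => ?_
        rw [hb, ← mul_assoc]
        exact mul_le_mul_of_nonneg_right (hbd i) (sq_nonneg _)
      have f3' : ∑ l ∈ S, ∑ i, ∑ j, W1 i j * ((U i l / r i) * (U j l / r j))
          ≤ S.card * (K * ξ) := by
        refine (Finset.sum_le_sum fun l _ => f3 l).trans ?_
        simp
      have f4 : ∑ l ∈ S, μ l = ∑ l ∈ S, ∑ i, ∑ j, Q i j * (U i l * U j l)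
          + ∑ l ∈ S, ∑ i, ∑ j, T i j * (U i l * U j l)
          + ∑ l ∈ S, ∑ i, ∑ j, W1 i j * ((U i l / r i) * (U j l / r j)) := by
        simp only [← Finset.sum_add_distrib]
        refine Finset.sum_congr rfl fun l _ => ?_
        rw [← aux_eig U hU μ l]
        refine Finset.sum_congr rfl fun i _ => Finset.sum_congr rfl fun j _ => ?_
        rw [hA', hW]
        simp only [Q]
        ring
      have f2'' : ∑ l ∈ S, ∑ i, ∑ j, T i j * (U i l * U j l) ≤ K := f2.trans f2'
      linarith
    have hcard : ∀ q, q ≤ n → (Finset.univ.filter (fun i : Fin n => (i : ℕ) < q)).card = q := by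
      intro q hq
      rw [Fin.card_filter_val_lt]
      omega
    have hp := tot (Finset.univ.filter (fun i : Fin n => (i : ℕ) < p))
    rw [hcard p hpn] at hp
    have hsplit : ∑ l ∈ Finset.univ.filter (fun i : Fin n => (i : ℕ) < p), μ l
        = ∑ l ∈ Finset.univ.filter (fun i : Fin n => (i : ℕ) < K), μ l
        + ∑ i ∈ Finset.univ.filter (fun i : Fin n => K ≤ (i : ℕ) ∧ (i : ℕ) < p), μ i := by
      rw [← Finset.sum_union]
      · refine Finset.sum_congr ?_ fun _ _ => rfl
        ext i
        simp only [Finset.mem_filter, Finset.mem_univ, true_and, Finset.mem_union]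
        omega
      · rw [Finset.disjoint_left]
        intro i
        simp only [Finset.mem_filter, Finset.mem_univ, true_and]
        omega
    have hK : (K : ℝ) * (1 - 2 * (K * ξ)) ≤
        ∑ l ∈ Finset.univ.filter (fun i : Fin n => (i : ℕ) < K), μ l := by
      have := Finset.card_nsmul_le_sum (Finset.univ.filter (fun i : Fin n => (i : ℕ) < K)) μ
        (1 - 2 * (K * ξ)) (fun i hi => hlow i (by simpa using hi))
      rw [hcard K (hKp.trans hpn), nsmul_eq_mul] at this
      exact this
    have hKp' : (K : ℝ) ≤ p := by exact_mod_cast hKp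
    have := mul_le_mul_of_nonneg_right hKp' hKξ
    linarith

/-- paper's Lemma A.10.  There is an absolute constant `C > 0` such
that for any `K̄ ≥ 1` dividing `n`, any `K̄ ≤ p ≤ n`, `δ, ξ ∈ [0,1)`, and any symmetric
`W` partitioned into balanced blocks by `g : Fin n → Fin K̄` with in-block entries in
`[1/(1+δ), 1+δ]`, in-block same-column entry ratios at most `1+δ`, and off-block entries
nonnegative and at most `ξ` times every in-block entry, the eigenvalues
`λ̃₁ ≥ … ≥ λ̃ₙ` of the normalized matrix `Ã` of `W` (an antitone listing coming from a
spectral decomposition) satisfy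
(i) `1 − C K̄^{5/2} ξ ≤ λ̃ᵢ ≤ 1` for `i ∈ {1, …, K̄}` and
(ii) `Σ_{i=K̄+1}^{p} λ̃ᵢ ≤ C (sqrt(p K̄ δ) + p K̄^{5/2} ξ)`. -/
theorem perturbed_eigenvalue_bounds :
    ∃ C : ℝ, 0 < C ∧
      ∀ (n Kb p : ℕ), 1 ≤ Kb → Kb ∣ n → Kb ≤ p → p ≤ n →
      ∀ (δ ξ : ℝ), 0 ≤ δ → δ < 1 → 0 ≤ ξ → ξ < 1 →
      ∀ (g : Fin n → Fin Kb),
        (∀ k : Fin Kb, (Finset.univ.filter fun i => g i = k).card = n / Kb) →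
      ∀ (W : Matrix (Fin n) (Fin n) ℝ), W.IsSymm →
        (∀ i j, g i = g j → 1 / (1 + δ) ≤ W i j ∧ W i j ≤ 1 + δ) →
        (∀ s t j, g s = g j → g t = g j → W s j / W t j ≤ 1 + δ) →
        (∀ i j, g i ≠ g j → 0 ≤ W i j ∧ ∀ s t, g s = g t → W i j ≤ ξ * W s t) →
      ∀ (μ : Fin n → ℝ), Antitone μ →
      ∀ (U : Matrix (Fin n) (Fin n) ℝ), U * Uᵀ = 1 →
        normalizedMatrix W = U * Matrix.diagonal μ * Uᵀ →
        ((∀ i : Fin n, (i : ℕ) < Kb →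
            1 - C * (Kb : ℝ) ^ ((5 : ℝ) / 2) * ξ ≤ μ i ∧ μ i ≤ 1) ∧
          ∑ i ∈ Finset.univ.filter (fun i : Fin n => Kb ≤ (i : ℕ) ∧ (i : ℕ) < p), μ i ≤
            C * (Real.sqrt ((p : ℝ) * Kb * δ) +
              (p : ℝ) * (Kb : ℝ) ^ ((5 : ℝ) / 2) * ξ)) := by
  refine ⟨3, by norm_num, ?_⟩
  intro n Kb p hK1 hdvd hKp hpn δ ξ hδ0 hδ1 hξ0 hξ1 g hcard W hsym hin hratio hoff μ hμ U hU hA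
  obtain ⟨m, hm⟩ : ∃ m, m = n / Kb := ⟨_, rfl⟩
  have hnm : n = Kb * m := by rw [hm, Nat.mul_div_cancel' hdvd]
  have hmpos : 0 < m := by
    rcases Nat.eq_zero_or_pos m with h | h
    · rw [h] at hnm; omega
    · exact h
  have hmR : (0 : ℝ) < m := by exact_mod_cast hmpos
  have hnR : (n : ℝ) = Kb * m := by exact_mod_cast hnm
  rw [← hm] at hcard
  have hs : ∀ i j, W i j = W j i := fun i j => hsym.apply j i
  have hpos : ∀ i j, g i = g j → 0 < W i j := fun i j h =>
    lt_of_lt_of_le (by positivity) (hin i j h).1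
  let W0 : Matrix (Fin n) (Fin n) ℝ := fun i j => if g i = g j then W i j else 0
  let W1 : Matrix (Fin n) (Fin n) ℝ := fun i j => if g i = g j then 0 else W i j
  have hg : ∀ k, ∃ i, g i = k := by
    intro k
    have : (Finset.univ.filter fun i => g i = k).Nonempty := by
      rw [← Finset.card_pos, hcard]; exact hmpos
    obtain ⟨i, hi⟩ := this
    exact ⟨i, by simpa using hi⟩
  have p0 : ∀ i j, 0 ≤ W0 i j := fun i j => by
    simp only [W0]; split_ifs with h
    exacts [(hpos i j h).le, le_rfl]
  have p1 : ∀ i j, 0 ≤ W1 i j := fun i j => by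
    simp only [W1]; split_ifs with h
    exacts [le_rfl, (hoff i j h).1]
  have s0 : ∀ i j, W0 i j = W0 j i := fun i j => by
    simp only [W0, hs i j, eq_comm (a := g i)]
  have s1 : ∀ i j, W1 i j = W1 j i := fun i j => by
    simp only [W1, hs i j, eq_comm (a := g i)]
  have hsumc : ∀ i (c : ℝ), (∑ t, if g i = g t then c else 0) = m * c := by
    intro i c
    rw [← Finset.sum_filter, Finset.sum_const, nsmul_eq_mul]
    congr 2
    rw [← hcard (g i)]
    congr 1
    ext t
    simp [eq_comm]
  have hapos : ∀ i, 0 < ∑ j, W0 i j := fun i =>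
    Finset.sum_pos' (fun j _ => p0 i j) ⟨i, Finset.mem_univ _, by simpa [W0] using hpos i i rfl⟩
  have hmW : ∀ i j, m * W0 i j ≤ (1 + δ) * ∑ t, W0 j t := by
    intro i j
    by_cases h : g i = g j
    · rw [← hsumc j, Finset.mul_sum]
      refine Finset.sum_le_sum fun t _ => ?_
      by_cases ht : g j = g t
      · have := hratio i t j h ht.symm
        rw [div_le_iff₀ (hpos t j ht.symm)] at this
        simp only [W0, if_pos h, if_pos ht]
        rw [hs j t]; exact this
      · simp [W0, ht]
    · have : W0 i j = 0 := by simp [W0, h]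
      rw [this, mul_zero]
      have := hapos j
      positivity
  have hba : ∀ i, ∑ j, W1 i j ≤ Kb * ξ * ∑ j, W0 i j := by
    intro i
    have h1 : ∀ j, m * W1 i j ≤ ξ * ∑ t, W0 i t := by
      intro j
      by_cases h : g i = g j
      · have : W1 i j = 0 := by simp [W1, h]
        rw [this, mul_zero]
        exact mul_nonneg hξ0 (hapos i).le
      · rw [← hsumc i, Finset.mul_sum]
        refine Finset.sum_le_sum fun t _ => ?_
        by_cases ht : g i = g t
        · simp only [W1, W0, if_neg h, if_pos ht]
          exact (hoff i j h).2 i t ht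
        · simp [W0, ht]
    have h2 : ∑ j, m * W1 i j ≤ ∑ _j : Fin n, ξ * ∑ t, W0 i t :=
      Finset.sum_le_sum fun j _ => h1 j
    rw [← Finset.mul_sum] at h2
    simp only [Finset.sum_const, Finset.card_univ, Fintype.card_fin, nsmul_eq_mul, hnR] at h2
    refine le_of_mul_le_mul_left ?_ hmR
    linarith
  have hF : ∑ i, ∑ j, W0 i j ^ 2 / ((∑ t, W0 i t) * (∑ t, W0 j t)) ≤ Kb * (1 + δ) := by
    have h1 : ∀ i j, W0 i j ^ 2 / ((∑ t, W0 i t) * (∑ t, W0 j t)) ≤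
        (1 + δ) / m * (W0 i j / ∑ t, W0 i t) := by
      intro i j
      have hi := hapos i
      have hj := hapos j
      rw [div_mul_div_comm, div_le_div_iff₀ (mul_pos hi hj) (mul_pos hmR hi)]
      have := mul_le_mul_of_nonneg_left (hmW i j) (mul_nonneg (p0 i j) hi.le)
      nlinarith
    refine (Finset.sum_le_sum fun i _ => Finset.sum_le_sum fun j _ => h1 i j).trans ?_
    simp only [← Finset.mul_sum, ← Finset.sum_div]
    rw [Finset.sum_congr rfl (fun i _ => div_self (hapos i).ne')]
    simp only [Finset.sum_const, Finset.card_univ, Fintype.card_fin, nsmul_eq_mul, hnR]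
    apply le_of_eq
    field_simp
  obtain ⟨c1, c2⟩ := aux_core hKp hpn δ ξ hξ0 g hg W W0 W1 _ _
    (fun i j => by simp only [W0, W1]; split_ifs <;> simp) s0 s1 p0 p1
    (fun i j h => by simp [W0, h]) (fun _ => rfl) (fun _ => rfl) hapos hba hF μ hμ U hU hA
  have hK1R : (1 : ℝ) ≤ Kb := by exact_mod_cast hK1
  have hpw : (Kb : ℝ) ≤ (Kb : ℝ) ^ ((5 : ℝ) / 2) := by
    conv_lhs => rw [← Real.rpow_one (Kb : ℝ)]
    exact Real.rpow_le_rpow_of_exponent_le hK1R (by norm_num)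
  have hpw2 := mul_le_mul_of_nonneg_right hpw hξ0
  have hKξ : 0 ≤ (Kb : ℝ) * ξ := by positivity
  refine ⟨fun i hi => ⟨?_, (c1 i hi).2⟩, c2.trans ?_⟩
  · have := (c1 i hi).1
    linarith
  · have h3 := mul_le_mul_of_nonneg_left hpw2 (Nat.cast_nonneg (α := ℝ) p)
    have h4 := Real.sqrt_nonneg ((p : ℝ) * Kb * δ)
    rw [← mul_assoc]
    linarith
end
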